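/- Let R be a ring and let A_1, …, A_n and B_1, …, B_t be biuniform right R-modules. Then A_1 ⊕ ⋯ ⊕ A_n ≅ B_1 ⊕ ⋯ ⊕ B_t if and only if n = t and there exist two permutations σ, τ of {1, …, n} such that A_i and B_{σ(i)} belong to the same monogeny class and A_i and B_{τ(i)} belong to the same epigeny class for every i = 1, …, n. -/

import Mathlib

/-- Two modules belong to the same monogeny class if there are injective homomorphisms
in both directions. -/
def SameMonogenyClass (R : Type*) [Ring R] (M N : Type*) [AddCommGroup M] [Module R M]
    [AddCommGroup N] [Module R N] : Prop :=
  (∃ f : M →ₗ[R] N, Function.Injective f) ∧ ∃ g : N →ₗ[R] M, Function.Injective g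

/-- Two modules belong to the same epigeny class if there are surjective homomorphisms
in both directions. -/
def SameEpigenyClass (R : Type*) [Ring R] (M N : Type*) [AddCommGroup M] [Module R M]
    [AddCommGroup N] [Module R N] : Prop :=
  (∃ f : M →ₗ[R] N, Function.Surjective f) ∧ ∃ g : N →ₗ[R] M, Function.Surjective g

/-- A module is uniform if it is nonzero and any two nonzero submodules intersect
nontrivially. -/
def IsUniformModule (R : Type*) [Ring R] (M : Type*) [AddCommGroup M] [Module R M] : Prop :=
  (∃ x : M, x ≠ 0) ∧ ∀ N P : Submodule R M, N ≠ ⊥ → P ≠ ⊥ → N ⊓ P ≠ ⊥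

/-- A module is couniform (hollow) if it is nonzero and the sum of any two proper
submodules is proper. -/
def IsCouniformModule (R : Type*) [Ring R] (M : Type*) [AddCommGroup M] [Module R M] : Prop :=
  (∃ x : M, x ≠ 0) ∧ ∀ N P : Submodule R M, N ≠ ⊤ → P ≠ ⊤ → N ⊔ P ≠ ⊤

/-- A module is biuniform if it is both uniform and couniform. -/
def IsBiuniformModule (R : Type*) [Ring R] (M : Type*) [AddCommGroup M] [Module R M] : Prop :=
  IsUniformModule R M ∧ IsCouniformModule R M

open Function

section Classes

variable {R : Type*} [Ring R] {M N P : Type*} [AddCommGroup M] [Module R M]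
  [AddCommGroup N] [Module R N] [AddCommGroup P] [Module R P]

theorem SameMonogenyClass.refl (R M : Type*) [Ring R] [AddCommGroup M] [Module R M] :
    SameMonogenyClass R M M :=
  ⟨⟨LinearMap.id, injective_id⟩, ⟨LinearMap.id, injective_id⟩⟩

theorem SameMonogenyClass.symm (h : SameMonogenyClass R M N) : SameMonogenyClass R N M :=
  ⟨h.2, h.1⟩

theorem SameMonogenyClass.trans (h : SameMonogenyClass R M N) (h' : SameMonogenyClass R N P) :
    SameMonogenyClass R M P := by
  obtain ⟨⟨f, hf⟩, ⟨g, hg⟩⟩ := h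
  obtain ⟨⟨f', hf'⟩, ⟨g', hg'⟩⟩ := h'
  exact ⟨⟨f' ∘ₗ f, hf'.comp hf⟩, ⟨g ∘ₗ g', hg.comp hg'⟩⟩

theorem SameEpigenyClass.refl (R M : Type*) [Ring R] [AddCommGroup M] [Module R M] :
    SameEpigenyClass R M M :=
  ⟨⟨LinearMap.id, surjective_id⟩, ⟨LinearMap.id, surjective_id⟩⟩

theorem SameEpigenyClass.symm (h : SameEpigenyClass R M N) : SameEpigenyClass R N M :=
  ⟨h.2, h.1⟩

theorem SameEpigenyClass.trans (h : SameEpigenyClass R M N) (h' : SameEpigenyClass R N P) :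
    SameEpigenyClass R M P := by
  obtain ⟨⟨f, hf⟩, ⟨g, hg⟩⟩ := h
  obtain ⟨⟨f', hf'⟩, ⟨g', hg'⟩⟩ := h'
  exact ⟨⟨f' ∘ₗ f, hf'.comp hf⟩, ⟨g ∘ₗ g', hg.comp hg'⟩⟩

theorem SameMonogenyClass.of_linearEquiv (e : M ≃ₗ[R] N) : SameMonogenyClass R M N :=
  ⟨⟨e, e.injective⟩, ⟨e.symm, e.symm.injective⟩⟩

theorem SameEpigenyClass.of_linearEquiv (e : M ≃ₗ[R] N) : SameEpigenyClass R M N :=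
  ⟨⟨e, e.surjective⟩, ⟨e.symm, e.symm.surjective⟩⟩

theorem IsUniformModule.finset_inf_ne_bot (h : IsUniformModule R M) {ι : Type*} (s : Finset ι)
    (K : ι → Submodule R M) (hK : ∀ i ∈ s, K i ≠ ⊥) : s.inf K ≠ ⊥ := by
  classical
  induction s using Finset.induction with
  | empty =>
    obtain ⟨x, hx⟩ := h.1
    exact fun h0 => hx ((Submodule.mem_bot R).1 (h0 ▸ Submodule.mem_top))
  | insert i s _ ih =>
    rw [Finset.inf_insert]
    exact h.2 _ _ (hK i (by simp)) (ih fun j hj => hK j (by simp [hj]))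

theorem IsCouniformModule.finset_sup_ne_top (h : IsCouniformModule R M) {ι : Type*}
    (s : Finset ι) (K : ι → Submodule R M) (hK : ∀ i ∈ s, K i ≠ ⊤) : s.sup K ≠ ⊤ := by
  classical
  induction s using Finset.induction with
  | empty =>
    obtain ⟨x, hx⟩ := h.1
    intro h0
    have : x ∈ (⊥ : Submodule R M) := by
      rw [Finset.sup_empty] at h0
      rw [h0]
      exact Submodule.mem_top
    exact hx ((Submodule.mem_bot R).1 this)
  | insert i s _ ih =>
    rw [Finset.sup_insert]
    exact h.2 _ _ (hK i (by simp)) (ih fun j hj => hK j (by simp [hj]))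

/-- A nonzero module embedding into a uniform module is uniform. -/
theorem IsUniformModule.of_injective (h : IsUniformModule R N) (h0 : ∃ x : M, x ≠ 0)
    (f : M →ₗ[R] N) (hf : Injective f) : IsUniformModule R M := by
  refine ⟨h0, fun K L hK hL hKL => ?_⟩
  have key : ∀ K : Submodule R M, K ≠ ⊥ → K.map f ≠ ⊥ := fun K hK h' =>
    hK (Submodule.map_injective_of_injective hf (by rw [h', Submodule.map_bot]))
  refine h.2 _ _ (key K hK) (key L hL) ?_
  rw [← Submodule.map_inf f hf, hKL, Submodule.map_bot]

/-- A nonzero quotient of a couniform module is couniform. -/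
theorem IsCouniformModule.of_surjective (h : IsCouniformModule R M) (h0 : ∃ x : N, x ≠ 0)
    (f : M →ₗ[R] N) (hf : Surjective f) : IsCouniformModule R N := by
  refine ⟨h0, fun K L hK hL hKL => ?_⟩
  have key : ∀ K : Submodule R N, K ≠ ⊤ → K.comap f ≠ ⊤ := fun K hK h' =>
    hK (Submodule.comap_injective_of_surjective hf (by rw [h', Submodule.comap_top]))
  refine h.2 _ _ (key K hK) (key L hL) (eq_top_iff.2 fun x _ => ?_)
  obtain ⟨k, hk, l, hl, hkl⟩ := Submodule.mem_sup.1 (hKL ▸ Submodule.mem_top : f x ∈ K ⊔ L)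
  obtain ⟨k, rfl⟩ := hf k
  refine Submodule.mem_sup.2 ⟨k, hk, x - k, ?_, by abel⟩
  rw [Submodule.mem_comap, map_sub, ← hkl, add_sub_cancel_left]
  exact hl

theorem IsUniformModule.injective_of_comp (h : IsUniformModule R N) (h0 : ∃ x : M, x ≠ 0)
    {f : M →ₗ[R] N} {g : N →ₗ[R] P} (hgf : Injective (g ∘ₗ f)) :
    Injective f ∧ Injective g := by
  have hf : Injective f := Injective.of_comp (f := g) hgf
  refine ⟨hf, ?_⟩
  by_contra hg
  rw [← LinearMap.ker_eq_bot] at hg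
  have hr : LinearMap.range f ≠ ⊥ := by
    obtain ⟨x, hx⟩ := h0
    intro h'
    rw [LinearMap.range_eq_bot] at h'
    exact hx (hf (by simp [h']))
  refine h.2 _ _ hg hr (eq_bot_iff.2 ?_)
  rintro _ ⟨h1, x, rfl⟩
  have : x = 0 := hgf (by simpa using h1)
  simp [this]

theorem IsCouniformModule.surjective_of_comp (h : IsCouniformModule R N) (h0 : ∃ x : P, x ≠ 0)
    {f : M →ₗ[R] N} {g : N →ₗ[R] P} (hgf : Surjective (g ∘ₗ f)) :
    Surjective f ∧ Surjective g := by
  have hg : Surjective g := Surjective.of_comp (g := f) hgf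
  refine ⟨?_, hg⟩
  by_contra hf
  rw [← LinearMap.range_eq_top] at hf
  have hk : LinearMap.ker g ≠ ⊤ := by
    obtain ⟨x, hx⟩ := h0
    intro h'
    rw [LinearMap.ker_eq_top] at h'
    obtain ⟨y, rfl⟩ := hg x
    exact hx (by simp [h'])
  refine h.2 _ _ hf hk (eq_top_iff.2 fun y _ => ?_)
  obtain ⟨x, hx⟩ := hgf (g y)
  exact Submodule.mem_sup.2 ⟨f x, ⟨x, rfl⟩, y - f x, by simpa [sub_eq_zero] using hx.symm, by abel⟩

theorem bijective_add_of_injective_of_surjective (hM : IsUniformModule R M)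
    (hN : IsCouniformModule R N) {f g : M →ₗ[R] N} (hf : Injective f) (hf' : ¬ Surjective f)
    (hg : Surjective g) (hg' : ¬ Injective g) : Bijective (f + g) := by
  constructor
  · by_contra h
    rw [← LinearMap.ker_eq_bot] at h hg'
    refine hM.2 _ _ h hg' (eq_bot_iff.2 ?_)
    rintro x ⟨h1, h2⟩
    have h1 : f x + g x = 0 := h1
    have h2 : g x = 0 := h2
    have : x = 0 := hf (by simpa [h2] using h1)
    simp [this]
  · by_contra h
    rw [← LinearMap.range_eq_top] at h hf'
    refine hN.2 _ _ h hf' (eq_top_iff.2 fun y _ => ?_)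
    obtain ⟨x, rfl⟩ := hg y
    exact Submodule.mem_sup.2 ⟨(f + g) x, ⟨x, rfl⟩, - f x, ⟨-x, by simp⟩, by simp⟩

theorem nonempty_linearEquiv_of_sameClasses (hM : IsUniformModule R M)
    (hN : IsCouniformModule R N) (hm : SameMonogenyClass R M N) (he : SameEpigenyClass R M N) :
    Nonempty (M ≃ₗ[R] N) := by
  obtain ⟨⟨f, hf⟩, -⟩ := hm
  obtain ⟨⟨g, hg⟩, -⟩ := he
  by_cases hf' : Surjective f
  · exact ⟨LinearEquiv.ofBijective f ⟨hf, hf'⟩⟩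
  by_cases hg' : Injective g
  · exact ⟨LinearEquiv.ofBijective g ⟨hg', hg⟩⟩
  exact ⟨LinearEquiv.ofBijective _ (bijective_add_of_injective_of_surjective hM hN hf hf' hg hg')⟩

end Classes

universe u v w

/-- A biuniform module in the monogeny class of `C` and in the epigeny class of `D` is a direct
summand of `C × D`, with a biuniform complement whose classes are the two remaining ones. -/
theorem exists_biuniform_complement {R : Type*} [Ring R] {A : Type u} {C D : Type w}
    [AddCommGroup A] [Module R A] [AddCommGroup C] [Module R C] [AddCommGroup D] [Module R D]
    (hA : IsBiuniformModule R A) (hC : IsBiuniformModule R C) (hD : IsBiuniformModule R D)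
    (hm : SameMonogenyClass R A C) (he : SameEpigenyClass R A D) :
    ∃ X : ModuleCat.{w} R, IsBiuniformModule R X ∧ Nonempty ((A × X) ≃ₗ[R] C × D) ∧
      SameMonogenyClass R X D ∧ SameEpigenyClass R X C := by
  obtain ⟨⟨a, ha⟩, ⟨a', ha'⟩⟩ := id hm
  obtain ⟨⟨b, hb⟩, ⟨b', hb'⟩⟩ := id he
  by_cases hs : Surjective (a' ∘ₗ a)
  · have e : A ≃ₗ[R] C := (LinearEquiv.ofBijective a' ⟨ha', Surjective.of_comp (g := a) hs⟩).symm
    exact ⟨ModuleCat.of R D, hD, ⟨e.prodCongr (LinearEquiv.refl R D)⟩, .refl R D,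
      he.symm.trans (.of_linearEquiv e)⟩
  by_cases hi : Injective (b' ∘ₗ b)
  · have e : A ≃ₗ[R] D := LinearEquiv.ofBijective b ⟨Injective.of_comp (f := b') hi, hb⟩
    exact ⟨ModuleCat.of R C, hC,
      ⟨(e.prodCongr (LinearEquiv.refl R C)).trans (LinearEquiv.prodComm R D C)⟩,
      hm.symm.trans (.of_linearEquiv e), .refl R C⟩
  have hbij : Bijective (a' ∘ₗ a + b' ∘ₗ b) := bijective_add_of_injective_of_surjective hA.1 hA.2
    (ha'.comp ha) hs (hb'.comp hb) hi
  let θ := LinearEquiv.ofBijective _ hbij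
  let i : A →ₗ[R] C × D := a.prod b
  let q : C × D →ₗ[R] A := θ.symm.toLinearMap ∘ₗ a'.coprod b'
  have hqi : ∀ x, q (i x) = x := fun x => θ.symm_apply_apply x
  have hq : ∀ c d, q (c, d) = 0 ↔ a' c + b' d = 0 := fun c d => by
    simp only [q, LinearMap.comp_apply, LinearEquiv.coe_coe, LinearEquiv.map_eq_zero_iff,
      LinearMap.coprod_apply]
  let X := LinearMap.ker q
  let p : C × D →ₗ[R] X := (LinearMap.id - i ∘ₗ q).codRestrict X fun x => by
    simp [X, hqi]
  have hp : ∀ x, ((p x : X) : C × D) = x - i (q x) := fun x => rfl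
  have hpX : ∀ x : X, p x = x := fun x => Subtype.ext (by
    rw [hp, LinearMap.mem_ker.1 x.2]; simp)
  have hpi : ∀ x, p (i x) = 0 := fun x => Subtype.ext (by rw [hp, hqi]; simp)
  -- the projection of the complement to `D` and the one to `C`
  have hXD : Injective (LinearMap.snd R C D ∘ₗ X.subtype) := by
    rw [← LinearMap.ker_eq_bot, eq_bot_iff]
    rintro ⟨⟨c, d⟩, hx⟩ h
    have hd : d = 0 := h
    subst hd
    have := (hq c 0).1 hx
    have hc : c = 0 := ha' (by simpa using this)
    simp [hc]
  have hXC : Surjective (LinearMap.fst R C D ∘ₗ X.subtype) := fun c => by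
    obtain ⟨d, hd⟩ := hb' (-a' c)
    exact ⟨⟨(c, d), (hq c d).2 (by simp [hd])⟩, rfl⟩
  have hDX : Injective (p ∘ₗ LinearMap.inr R C D) := by
    rw [← LinearMap.ker_eq_bot, eq_bot_iff]
    intro d h
    have h1 : ((0 : C), d) = i (q (0, d)) := by
      rw [← sub_eq_zero, ← hp]
      exact congrArg Subtype.val h
    have h2 : q (0, d) = 0 := ha (by simpa [i] using (congrArg Prod.fst h1).symm)
    have h3 := congrArg Prod.snd h1
    rw [h2] at h3
    simpa using h3
  have hCX : Surjective (p ∘ₗ LinearMap.inl R C D) := fun x => by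
    obtain ⟨y, hy⟩ := hb x.1.2
    refine ⟨x.1.1 - a y, ?_⟩
    have : ((x.1.1 - a y, 0) : C × D) = x.1 - i y := by ext <;> simp [i, hy]
    rw [LinearMap.comp_apply, LinearMap.inl_apply, this, map_sub, hpi, hpX, sub_zero]
  have hX0 : ∃ x : X, x ≠ 0 := by
    obtain ⟨c, hc⟩ := hC.1.1
    obtain ⟨x, rfl⟩ := hXC c
    exact ⟨x, fun h => hc (by rw [h, map_zero])⟩
  refine ⟨ModuleCat.of R X, ⟨hD.1.of_injective hX0 _ hXD, hC.2.of_surjective hX0 _ hCX⟩,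
    ⟨LinearEquiv.ofLinearMap (i.coprod X.subtype) (q.prod p) ?_ ?_⟩, ⟨⟨_, hXD⟩, ⟨_, hDX⟩⟩,
    ⟨⟨_, hXC⟩, ⟨_, hCX⟩⟩⟩
  · refine LinearMap.ext fun x => ?_
    change i (q x) + (p x : C × D) = x
    rw [hp, add_sub_cancel]
  · refine LinearMap.ext fun ⟨y, x⟩ => ?_
    change (q (i y + x.1), p (i y + x.1)) = (y, x)
    rw [map_add, map_add, hqi, hpi, LinearMap.mem_ker.1 x.2, add_zero, zero_add]
    exact congrArg (Prod.mk y) (hpX x)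

/-- Splitting off one factor of a product of modules. -/
def piSplitAtLinearEquiv (R : Type*) [Ring R] {ι : Type*} [DecidableEq ι] (k : ι)
    (M : ι → Type*) [∀ i, AddCommGroup (M i)] [∀ i, Module R (M i)] :
    ((i : ι) → M i) ≃ₗ[R] M k × ((j : { j // j ≠ k }) → M j) :=
  { Equiv.piSplitAt k M with
    map_add' := fun _ _ => rfl
    map_smul' := fun _ _ => rfl }

theorem nonempty_pi_linearEquiv_of_perm {R : Type*} [Ring R] {n : ℕ} (A : Fin n → Type u)
    (B : Fin n → ModuleCat.{w} R) [∀ i, AddCommGroup (A i)] [∀ i, Module R (A i)]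
    (hA : ∀ i, IsBiuniformModule R (A i)) (hB : ∀ j, IsBiuniformModule R (B j))
    (τ : Equiv.Perm (Fin n)) (hm : ∀ i, SameMonogenyClass R (A i) (B i))
    (he : ∀ i, SameEpigenyClass R (A i) (B (τ i))) :
    Nonempty (((i : Fin n) → A i) ≃ₗ[R] ((j : Fin n) → B j)) := by
  induction n with
  | zero => exact ⟨LinearEquiv.ofSubsingleton _ _⟩
  | succ n ih =>
    -- `τ'` is `τ` followed by the transposition of `0` and `τ 0`, restricted to nonzero indices
    obtain ⟨τ', hτ'⟩ : ∃ τ' : Equiv.Perm (Fin n), ∀ i : Fin n,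
        (τ' i).succ = Equiv.swap 0 (τ 0) (τ i.succ) := by
      have h : ∀ i : Fin n, ∃ j : Fin n, j.succ = Equiv.swap 0 (τ 0) (τ i.succ) := fun i =>
        Fin.exists_succ_eq.2 fun h => by
          rw [Equiv.swap_apply_eq_iff, Equiv.swap_apply_left] at h
          exact Fin.succ_ne_zero i (τ.injective h)
      choose f hf using h
      have hinj : Injective f := fun i j hij => by
        have := hf i
        rw [hij, hf j] at this
        exact (Fin.succ_injective _ (τ.injective ((Equiv.swap _ _).injective this))).symm
      exact ⟨Equiv.ofBijective f (Finite.injective_iff_bijective.1 hinj), hf⟩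
    by_cases h0 : τ 0 = 0
    · obtain ⟨e⟩ := nonempty_linearEquiv_of_sameClasses (hA 0).1 (hB 0).2 (hm 0)
        (by have := he 0; rwa [h0] at this)
      obtain ⟨E⟩ := ih (fun i => A i.succ) (fun i => B i.succ) (fun i => hA _) (fun i => hB _) τ'
        (fun i => hm _) (fun i => by
          have := he i.succ
          rw [hτ', h0, Equiv.swap_self]
          exact this)
      exact ⟨(Fin.consLinearEquiv R A).symm.trans ((e.prodCongr E).trans
        (Fin.consLinearEquiv R fun i => B i))⟩
    · obtain ⟨k, hk⟩ := Fin.exists_succ_eq.2 h0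
      obtain ⟨X, hX, ⟨e⟩, hXm, hXe⟩ := exists_biuniform_complement (hA 0) (hB 0) (hB (τ 0))
        (hm 0) (he 0)
      let B' : Fin n → ModuleCat.{w} R := Function.update (fun i => B i.succ) k X
      have hk' : B' k = X := Function.update_self ..
      have hne : ∀ j, j ≠ k → B' j = B j.succ := fun j hj => Function.update_of_ne hj ..
      obtain ⟨E⟩ := ih (fun i => A i.succ) B' (fun i => hA _) (fun i => by
          by_cases h : i = k
          · rw [h, hk']; exact hX
          · rw [hne i h]; exact hB _) τ'
        (fun i => by
          by_cases h : i = k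
          · subst h
            rw [hk']
            have := hm i.succ
            rw [hk] at this ⊢
            exact this.trans hXm.symm
          · rw [hne i h]; exact hm _)
        (fun i => by
          have h1 := he i.succ
          have h2 := hτ' i
          by_cases h : τ' i = k
          · rw [h, hk']
            rw [h, hk, eq_comm, Equiv.swap_apply_eq_iff, Equiv.swap_apply_right] at h2
            rw [h2] at h1
            exact h1.trans hXe.symm
          · rw [hne _ h, h2, Equiv.swap_apply_of_ne_of_ne]
            · exact h1
            · intro h3
              rw [h3, Equiv.swap_apply_left, ← hk] at h2
              exact h (Fin.succ_injective _ h2)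
            · exact fun h3 => Fin.succ_ne_zero i (τ.injective h3))
      have E1 : ((j : Fin n) → B' j) ≃ₗ[R] X × ((j : { j // j ≠ k }) → B (Fin.succ j)) :=
        (piSplitAtLinearEquiv R k fun j => B' j).trans
          ((LinearEquiv.cast (R := R) (M := fun Y : ModuleCat.{w} R => Y) hk').prodCongr
            (LinearEquiv.piCongrRight fun j =>
              LinearEquiv.cast (R := R) (M := fun Y : ModuleCat.{w} R => Y) (hne j j.2)))
      have E2 := piSplitAtLinearEquiv R k fun j : Fin n => B j.succ
      rw [← hk] at e
      exact ⟨(Fin.consLinearEquiv R A).symm ≪≫ₗ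
        ((LinearEquiv.refl R (A 0)).prodCongr (E ≪≫ₗ E1)) ≪≫ₗ
        (LinearEquiv.prodAssoc R _ _ _).symm ≪≫ₗ
        (e.prodCongr (LinearEquiv.refl R _)) ≪≫ₗ (LinearEquiv.prodAssoc R _ _ _) ≪≫ₗ
        ((LinearEquiv.refl R (B 0)).prodCongr E2.symm) ≪≫ₗ
        (Fin.consLinearEquiv R fun i => B i)⟩

section Counting

variable {R : Type*} [Ring R] {ι κ : Type*}
  {A : ι → Type*} {B : κ → Type*}
  [∀ i, AddCommGroup (A i)] [∀ i, Module R (A i)] [∀ j, AddCommGroup (B j)] [∀ j, Module R (B j)]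

/-- The matrix entries of a homomorphism between finite direct sums. -/
def piEntry [DecidableEq ι] (φ : ((i : ι) → A i) →ₗ[R] ((j : κ) → B j)) (j : κ) (i : ι) :
    A i →ₗ[R] B j :=
  LinearMap.proj j ∘ₗ φ ∘ₗ LinearMap.single R A i

theorem apply_eq_sum_piEntry [Fintype ι] [DecidableEq ι] (φ : ((i : ι) → A i) →ₗ[R] ((j : κ) → B j))
    (x : (i : ι) → A i) (j : κ) : φ x j = ∑ i, piEntry φ j i (x i) := by
  conv_lhs => rw [← Finset.univ_sum_single x, map_sum, Finset.sum_apply]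
  rfl

theorem card_le_card_of_injectiveOn [DecidableEq ι] [DecidableEq κ]
    (φ : ((i : ι) → A i) →ₗ[R] ((j : κ) → B j))
    (K : (i : ι) → Submodule R (A i)) (hB : ∀ j, IsUniformModule R (B j))
    (t : Finset κ) (s : Finset ι) (hK : ∀ i ∈ s, K i ≠ ⊥)
    (hφ : ∀ x, (∀ i, x i ∈ K i) → (∀ i ∉ s, x i = 0) → (∀ j ∈ t, φ x j = 0) → x = 0) :
    s.card ≤ t.card := by
  induction t using Finset.induction generalizing s with
  | empty =>
    rw [Finset.card_empty, Nat.le_zero, Finset.card_eq_zero, Finset.eq_empty_iff_forall_notMem]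
    intro i hi
    obtain ⟨k, hk, hk0⟩ := Submodule.exists_mem_ne_zero_of_ne_bot (hK i hi)
    refine hk0 ?_
    have := hφ (Pi.single i k) (fun i' => ?_) (fun i' hi' => ?_) (by simp)
    · simpa using this
    · by_cases h : i' = i
      · subst h; simpa using hk
      · simp [h]
    · exact Pi.single_eq_of_ne (fun h : i' = i => hi' (h ▸ hi)) k
  | insert j₀ t hj₀ ih =>
    by_cases hex : ∃ i ∈ s, ∀ x, (∀ i, x i ∈ K i) → (∀ i' ∉ s.erase i, x i' = 0) →
        (∀ j ∈ t, φ x j = 0) → x = 0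
    · obtain ⟨i, hi, h⟩ := hex
      have := ih (s.erase i) (fun i' hi' => hK i' (Finset.mem_of_mem_erase hi')) h
      rw [Finset.card_erase_of_mem hi] at this
      rw [Finset.card_insert_of_notMem hj₀]
      omega
    push Not at hex
    rcases s.eq_empty_or_nonempty with rfl | ⟨i₀, hi₀⟩
    · simp
    exfalso
    -- vectors supported on a subset of `s`, killed by the components of `φ` in `t`
    let W : ι → Submodule R ((i : ι) → A i) := fun i =>
      { carrier := {x | (∀ i, x i ∈ K i) ∧ (∀ i' ∉ s.erase i, x i' = 0) ∧ ∀ j ∈ t, φ x j = 0}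
        add_mem' := fun {x y} hx hy => ⟨fun k => add_mem (hx.1 k) (hy.1 k),
          fun k hk => by simp [hx.2.1 k hk, hy.2.1 k hk],
          fun k hk => by simp [hx.2.2 k hk, hy.2.2 k hk]⟩
        zero_mem' := ⟨fun k => zero_mem _, fun _ _ => rfl, fun _ _ => by simp⟩
        smul_mem' := fun c x hx => ⟨fun k => Submodule.smul_mem _ c (hx.1 k),
          fun k hk => by simp [hx.2.1 k hk], fun k hk => by simp [hx.2.2 k hk]⟩ }
    let N : ι → Submodule R (B j₀) := fun i => (W i).map (LinearMap.proj j₀ ∘ₗ φ)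
    have hW : ∀ i, ∀ x ∈ W i, ∀ i' ∉ s, x i' = 0 := fun i x hx i' hi' =>
      hx.2.1 i' fun h => hi' (Finset.mem_of_mem_erase h)
    have hN : ∀ i ∈ s, N i ≠ ⊥ := fun i hi hbot => by
      obtain ⟨x, hx1, hx2, hx3, hx0⟩ := hex i hi
      have hx : x ∈ W i := ⟨hx1, hx2, hx3⟩
      refine hx0 (hφ x hx1 (hW i x hx) fun j hj => ?_)
      rcases Finset.mem_insert.1 hj with rfl | hj
      · exact (Submodule.mem_bot R).1 (hbot ▸ Submodule.mem_map_of_mem hx)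
      · exact hx3 j hj
    obtain ⟨y, hy, hy0⟩ :=
      Submodule.exists_mem_ne_zero_of_ne_bot ((hB j₀).finset_inf_ne_bot s N hN)
    rw [Submodule.mem_finsetInf] at hy
    obtain ⟨x, hx, hxy⟩ := hy i₀ hi₀
    refine hy0 (hxy ▸ ?_)
    suffices x = 0 by simp [this]
    funext i
    by_cases hi : i ∈ s
    · obtain ⟨x', hx', hxy'⟩ := hy i hi
      have hd : x - x' = 0 := by
        refine hφ _ (fun k => sub_mem (hx.1 k) (hx'.1 k)) (fun k hk => ?_) (fun j hj => ?_)
        · simp [hW _ x hx k hk, hW _ x' hx' k hk]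
        · rw [map_sub, Pi.sub_apply, sub_eq_zero]
          rcases Finset.mem_insert.1 hj with rfl | hj
          · exact hxy.trans hxy'.symm
          · rw [hx.2.2 j hj, hx'.2.2 j hj]
      rw [sub_eq_zero.1 hd]
      exact hx'.2.1 i (by simp)
    · exact hW _ x hx i hi

theorem card_le_card_of_surjectiveOn [DecidableEq ι] [DecidableEq κ]
    (φ : ((j : κ) → B j) →ₗ[R] ((i : ι) → A i))
    (I : (i : ι) → Submodule R (A i)) (hB : ∀ j, IsCouniformModule R (B j))
    (t : Finset κ) (s : Finset ι) (hI : ∀ i ∈ s, I i ≠ ⊤)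
    (hφ : ∀ y : (i : ι) → A i, ∃ x, (∀ j ∉ t, x j = 0) ∧ ∀ i ∈ s, φ x i - y i ∈ I i) :
    s.card ≤ t.card := by
  induction t using Finset.induction generalizing s with
  | empty =>
    rw [Finset.card_empty, Nat.le_zero, Finset.card_eq_zero, Finset.eq_empty_iff_forall_notMem]
    intro i hi
    refine hI i hi (eq_top_iff.2 fun y _ => ?_)
    obtain ⟨x, hx, hxy⟩ := hφ (Pi.single i y)
    have hx0 : x = 0 := funext fun j => hx j (by simp)
    have := hxy i hi
    simpa [hx0] using this
  | insert j₀ t hj₀ ih =>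
    by_cases hex : ∃ i ∈ s, ∀ y : (i : ι) → A i, ∃ x,
        (∀ j ∉ t, x j = 0) ∧ ∀ i' ∈ s.erase i, φ x i' - y i' ∈ I i'
    · obtain ⟨i, hi, h⟩ := hex
      have := ih (s.erase i) (fun i' hi' => hI i' (Finset.mem_of_mem_erase hi')) h
      rw [Finset.card_erase_of_mem hi] at this
      rw [Finset.card_insert_of_notMem hj₀]
      omega
    rcases s.eq_empty_or_nonempty with rfl | ⟨i₀, hi₀⟩
    · simp
    exfalso
    let W : ι → Submodule R ((j : κ) → B j) := fun i =>
      { carrier := {x | (∀ j ∉ insert j₀ t, x j = 0) ∧ ∀ i' ∈ s.erase i, φ x i' ∈ I i'}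
        add_mem' := fun {x y} hx hy => ⟨fun k hk => by simp [hx.1 k hk, hy.1 k hk],
          fun k hk => by simpa using add_mem (hx.2 k hk) (hy.2 k hk)⟩
        zero_mem' := ⟨fun _ _ => rfl, fun _ _ => by simp⟩
        smul_mem' := fun c x hx => ⟨fun k hk => by simp [hx.1 k hk],
          fun k hk => by simpa using Submodule.smul_mem _ c (hx.2 k hk)⟩ }
    let N : ι → Submodule R (B j₀) := fun i => (W i).map (LinearMap.proj j₀)
    have hN : ∀ i ∈ s, N i ≠ ⊤ := fun i hi htop => hex ⟨i, hi, fun y => by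
      obtain ⟨x, hx, hxy⟩ := hφ y
      obtain ⟨z, hz, hzx⟩ : x j₀ ∈ N i := htop ▸ Submodule.mem_top
      have hzx : z j₀ = x j₀ := hzx
      refine ⟨x - z, fun j hj => ?_, fun i' hi' => ?_⟩
      · by_cases h : j = j₀
        · subst h; simp [hzx]
        · have hj' : j ∉ insert j₀ t := by simp [h, hj]
          simp [hx j hj', hz.1 j hj']
      · have := sub_mem (hxy i' (Finset.mem_of_mem_erase hi')) (hz.2 i' hi')
        rwa [map_sub, Pi.sub_apply, sub_right_comm]⟩
    refine (hB j₀).finset_sup_ne_top s N hN (eq_top_iff.2 fun b _ => ?_)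
    let x : (j : κ) → B j := Pi.single j₀ b
    choose u hu hu' using fun i => hφ (Pi.single i (φ x i))
    have huW : ∀ i, u i ∈ W i := fun i => ⟨hu i, fun i' hi' => by
      have := hu' i i' (Finset.mem_of_mem_erase hi')
      rwa [Pi.single_eq_of_ne (Finset.ne_of_mem_erase hi'), sub_zero] at this⟩
    have hxW : x - ∑ i ∈ s, u i ∈ W i₀ := by
      refine ⟨fun j hj => ?_, fun i' hi' => ?_⟩
      · have hx : x j = 0 := Pi.single_eq_of_ne (fun h => hj (by simp [h])) b
        rw [Pi.sub_apply, hx, Finset.sum_apply, Finset.sum_eq_zero fun i _ => hu i j hj, sub_zero]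
      · have hi's := Finset.mem_of_mem_erase hi'
        have : φ (x - ∑ i ∈ s, u i) i' =
            - ∑ i ∈ s, (φ (u i) i' - (Pi.single i (φ x i) : (i : ι) → A i) i') := by
          rw [Finset.sum_sub_distrib, Finset.sum_pi_single, map_sub, map_sum, Pi.sub_apply,
            Finset.sum_apply, if_pos hi's, neg_sub]
        rw [this]
        exact neg_mem (sum_mem fun i _ => hu' i i' hi's)
    have hle : ∀ i ∈ s, N i ≤ s.sup N := fun i hi => Finset.le_sup hi
    have hb : b = (x - ∑ i ∈ s, u i) j₀ + ∑ i ∈ s, u i j₀ := by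
      simp [x]
    rw [hb]
    exact add_mem (hle i₀ hi₀ ⟨_, hxW, rfl⟩) (sum_mem fun i hi => hle i hi ⟨_, huW i, rfl⟩)

variable [Fintype ι] [Fintype κ]

open Classical in
theorem card_monogenyClass_le (hA : ∀ i, IsUniformModule R (A i))
    (hB : ∀ j, IsUniformModule R (B j)) (e : ((i : ι) → A i) ≃ₗ[R] ((j : κ) → B j))
    (M : Type*) [AddCommGroup M] [Module R M] :
    (Finset.univ.filter fun i => SameMonogenyClass R (A i) M).card ≤
      (Finset.univ.filter fun j => SameMonogenyClass R (B j) M).card := by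
  set S := Finset.univ.filter fun i => SameMonogenyClass R (A i) M with hS
  set T := Finset.univ.filter fun j => SameMonogenyClass R (B j) M with hT
  let f := piEntry e.toLinearMap
  let g := piEntry e.symm.toLinearMap
  let K : (i : ι) → Submodule R (A i) := fun k =>
    (S ×ˢ Tᶜ).inf fun p => LinearMap.ker (g p.1 p.2 ∘ₗ f p.2 k)
  refine card_le_card_of_injectiveOn e.toLinearMap K hB T S (fun k hk => ?_) fun x hxK hxS hxT => ?_
  · refine (hA k).finset_inf_ne_bot _ _ fun ⟨i, j⟩ hij h => ?_
    rw [LinearMap.ker_eq_bot] at h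
    obtain ⟨hf, hg⟩ := (hB j).injective_of_comp (hA k).1 h
    simp only [Finset.mem_product, Finset.mem_compl] at hij
    simp only [hS, hT, Finset.mem_filter, Finset.mem_univ, true_and] at hij hk
    obtain ⟨⟨v, hv⟩, -⟩ := hij.1.trans hk.symm
    exact hij.2 (SameMonogenyClass.trans ⟨⟨v ∘ₗ g i j, hv.comp hg⟩, ⟨_, hf⟩⟩ hk)
  · funext i
    by_cases hi : i ∈ S
    · rw [← e.symm_apply_apply x]
      refine (apply_eq_sum_piEntry e.symm.toLinearMap (e x) i).trans
        (Finset.sum_eq_zero fun j _ => ?_)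
      by_cases hj : j ∈ T
      · exact (congrArg _ (hxT j hj)).trans (map_zero _)
      · rw [show e x j = _ from apply_eq_sum_piEntry e.toLinearMap x j, map_sum]
        refine Finset.sum_eq_zero fun k _ => ?_
        exact (Submodule.mem_finsetInf.1 (hxK k)) (i, j) (by simp [hi, hj])
    · exact hxS i hi

open Classical in
theorem card_epigenyClass_le (hA : ∀ i, IsCouniformModule R (A i))
    (hB : ∀ j, IsCouniformModule R (B j)) (e : ((i : ι) → A i) ≃ₗ[R] ((j : κ) → B j))
    (M : Type*) [AddCommGroup M] [Module R M] :
    (Finset.univ.filter fun i => SameEpigenyClass R (A i) M).card ≤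
      (Finset.univ.filter fun j => SameEpigenyClass R (B j) M).card := by
  set S := Finset.univ.filter fun i => SameEpigenyClass R (A i) M with hS
  set T := Finset.univ.filter fun j => SameEpigenyClass R (B j) M with hT
  let f := piEntry e.toLinearMap
  let g := piEntry e.symm.toLinearMap
  let I : (i : ι) → Submodule R (A i) := fun i =>
    (S ×ˢ Tᶜ).sup fun p => LinearMap.range (g i p.2 ∘ₗ f p.2 p.1)
  refine card_le_card_of_surjectiveOn e.symm.toLinearMap I hB T S (fun i hi => ?_) fun y => ?_
  · refine (hA i).finset_sup_ne_top _ _ fun ⟨k, j⟩ hkj h => ?_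
    rw [LinearMap.range_eq_top] at h
    obtain ⟨hf, hg⟩ := (hB j).surjective_of_comp (hA i).1 h
    simp only [Finset.mem_product, Finset.mem_compl] at hkj
    simp only [hS, hT, Finset.mem_filter, Finset.mem_univ, true_and] at hkj hi
    obtain ⟨⟨v, hv⟩, -⟩ := hi.trans hkj.1.symm
    exact hkj.2 (SameEpigenyClass.trans ⟨⟨_, hg⟩, ⟨f j k ∘ₗ v, hf.comp hv⟩⟩ hi)
  · let y' : (i : ι) → A i := fun i => if i ∈ S then y i else 0
    let x : (j : κ) → B j := fun j => if j ∈ T then e y' j else 0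
    refine ⟨x, fun j hj => if_neg hj, fun i hi => ?_⟩
    have hy : y i = e.symm (e y') i := by
      rw [e.symm_apply_apply]
      exact (if_pos hi).symm
    have : e.symm x i - y i = ∑ j, g i j ((x - e y') j) := by
      rw [hy, ← Pi.sub_apply, ← map_sub]
      exact apply_eq_sum_piEntry e.symm.toLinearMap (x - e y') i
    refine this ▸ sum_mem fun j _ => ?_
    by_cases hj : j ∈ T
    · simp [x, hj]
    · have h1 : (x - e y') j = - ∑ k, f j k (y' k) := by
        rw [Pi.sub_apply, show e y' j = _ from apply_eq_sum_piEntry e.toLinearMap y' j]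
        simp [x, hj, f]
      rw [h1, map_neg, map_sum]
      refine neg_mem (sum_mem fun k _ => ?_)
      by_cases hk : k ∈ S
      · have hle : LinearMap.range (g i j ∘ₗ f j k) ≤ I i :=
          Finset.le_sup (f := fun p : ι × κ => LinearMap.range (g i p.2 ∘ₗ f p.2 p.1))
            (b := (k, j)) (by simp [hk, hj])
        exact hle ⟨_, rfl⟩
      · simp [y', hk]

end Counting

open Classical in
theorem exists_equiv_of_card_fiber_le {ι κ Q : Type*} [Fintype ι] [Fintype κ] (a : ι → Q)
    (b : κ → Q)
    (hab : ∀ i, (Finset.univ.filter fun k => a k = a i).card ≤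
      (Finset.univ.filter fun j => b j = a i).card)
    (hba : ∀ j, (Finset.univ.filter fun k => b k = b j).card ≤
      (Finset.univ.filter fun i => a i = b j).card) :
    ∃ σ : ι ≃ κ, ∀ i, b (σ i) = a i := by
  have hle : ∀ q, (Finset.univ.filter fun i => a i = q).card ≤
      (Finset.univ.filter fun j => b j = q).card := fun q => by
    by_cases h : ∃ i, a i = q
    · obtain ⟨i, rfl⟩ := h
      exact hab i
    · push Not at h
      simp [h]
  have hge : ∀ q, (Finset.univ.filter fun j => b j = q).card ≤
      (Finset.univ.filter fun i => a i = q).card := fun q => by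
    by_cases h : ∃ j, b j = q
    · obtain ⟨j, rfl⟩ := h
      exact hba j
    · push Not at h
      simp [h]
  have hcard : ∀ q, Nonempty ({ i // a i = q } ≃ { j // b j = q }) := fun q => by
    rw [← Fintype.card_eq, Fintype.card_subtype, Fintype.card_subtype]
    exact (hle q).antisymm (hge q)
  let E := fun q => (hcard q).some
  refine ⟨(Equiv.sigmaFiberEquiv a).symm.trans ((Equiv.sigmaCongrRight E).trans
    (Equiv.sigmaFiberEquiv b)), fun i => ?_⟩
  exact (E (a i) ⟨i, rfl⟩).2

section Permutations

variable {R : Type*} [Ring R] {ι κ : Type*} [Fintype ι] [Fintype κ]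
  {A : ι → Type*} {B : κ → Type*}
  [∀ i, AddCommGroup (A i)] [∀ i, Module R (A i)] [∀ j, AddCommGroup (B j)] [∀ j, Module R (B j)]

theorem exists_equiv_sameMonogenyClass (hA : ∀ i, IsUniformModule R (A i))
    (hB : ∀ j, IsUniformModule R (B j)) (e : ((i : ι) → A i) ≃ₗ[R] ((j : κ) → B j)) :
    ∃ σ : ι ≃ κ, ∀ i, SameMonogenyClass R (A i) (B (σ i)) := by
  classical
  let a : ι → Set ι × Set κ := fun i =>
    ({k | SameMonogenyClass R (A k) (A i)}, {j | SameMonogenyClass R (B j) (A i)})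
  let b : κ → Set ι × Set κ := fun j =>
    ({k | SameMonogenyClass R (A k) (B j)}, {l | SameMonogenyClass R (B l) (B j)})
  have haa : ∀ k i, a k = a i ↔ SameMonogenyClass R (A k) (A i) := fun k i =>
    ⟨fun h => (h ▸ SameMonogenyClass.refl R (A k) : k ∈ (a i).1), fun h => Prod.ext
      (Set.ext fun _ => ⟨fun h' => h'.trans h, fun h' => h'.trans h.symm⟩)
      (Set.ext fun _ => ⟨fun h' => h'.trans h, fun h' => h'.trans h.symm⟩)⟩
  have hab : ∀ i j, a i = b j ↔ SameMonogenyClass R (A i) (B j) := fun k i =>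
    ⟨fun h => (h ▸ SameMonogenyClass.refl R (A k) : k ∈ (b i).1), fun h => Prod.ext
      (Set.ext fun _ => ⟨fun h' => h'.trans h, fun h' => h'.trans h.symm⟩)
      (Set.ext fun _ => ⟨fun h' => h'.trans h, fun h' => h'.trans h.symm⟩)⟩
  have hba : ∀ j i, b j = a i ↔ SameMonogenyClass R (B j) (A i) := fun j i =>
    eq_comm.trans ((hab i j).trans ⟨.symm, .symm⟩)
  have hbb : ∀ k j, b k = b j ↔ SameMonogenyClass R (B k) (B j) := fun k i =>
    ⟨fun h => (h ▸ SameMonogenyClass.refl R (B k) : k ∈ (b i).2), fun h => Prod.ext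
      (Set.ext fun _ => ⟨fun h' => h'.trans h, fun h' => h'.trans h.symm⟩)
      (Set.ext fun _ => ⟨fun h' => h'.trans h, fun h' => h'.trans h.symm⟩)⟩
  obtain ⟨σ, hσ⟩ := exists_equiv_of_card_fiber_le a b
    (fun i => by simpa only [haa, hba] using card_monogenyClass_le hA hB e (A i))
    (fun j => by simpa only [hab, hbb] using card_monogenyClass_le hB hA e.symm (B j))
  exact ⟨σ, fun i => (hab _ _).1 (hσ i).symm⟩

theorem exists_equiv_sameEpigenyClass (hA : ∀ i, IsCouniformModule R (A i))
    (hB : ∀ j, IsCouniformModule R (B j)) (e : ((i : ι) → A i) ≃ₗ[R] ((j : κ) → B j)) :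
    ∃ σ : ι ≃ κ, ∀ i, SameEpigenyClass R (A i) (B (σ i)) := by
  classical
  let a : ι → Set ι × Set κ := fun i =>
    ({k | SameEpigenyClass R (A k) (A i)}, {j | SameEpigenyClass R (B j) (A i)})
  let b : κ → Set ι × Set κ := fun j =>
    ({k | SameEpigenyClass R (A k) (B j)}, {l | SameEpigenyClass R (B l) (B j)})
  have haa : ∀ k i, a k = a i ↔ SameEpigenyClass R (A k) (A i) := fun k i =>
    ⟨fun h => (h ▸ SameEpigenyClass.refl R (A k) : k ∈ (a i).1), fun h => Prod.ext
      (Set.ext fun _ => ⟨fun h' => h'.trans h, fun h' => h'.trans h.symm⟩)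
      (Set.ext fun _ => ⟨fun h' => h'.trans h, fun h' => h'.trans h.symm⟩)⟩
  have hab : ∀ i j, a i = b j ↔ SameEpigenyClass R (A i) (B j) := fun k i =>
    ⟨fun h => (h ▸ SameEpigenyClass.refl R (A k) : k ∈ (b i).1), fun h => Prod.ext
      (Set.ext fun _ => ⟨fun h' => h'.trans h, fun h' => h'.trans h.symm⟩)
      (Set.ext fun _ => ⟨fun h' => h'.trans h, fun h' => h'.trans h.symm⟩)⟩
  have hba : ∀ j i, b j = a i ↔ SameEpigenyClass R (B j) (A i) := fun j i =>
    eq_comm.trans ((hab i j).trans ⟨.symm, .symm⟩)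
  have hbb : ∀ k j, b k = b j ↔ SameEpigenyClass R (B k) (B j) := fun k i =>
    ⟨fun h => (h ▸ SameEpigenyClass.refl R (B k) : k ∈ (b i).2), fun h => Prod.ext
      (Set.ext fun _ => ⟨fun h' => h'.trans h, fun h' => h'.trans h.symm⟩)
      (Set.ext fun _ => ⟨fun h' => h'.trans h, fun h' => h'.trans h.symm⟩)⟩
  obtain ⟨σ, hσ⟩ := exists_equiv_of_card_fiber_le a b
    (fun i => by simpa only [haa, hba] using card_epigenyClass_le hA hB e (A i))
    (fun j => by simpa only [hab, hbb] using card_epigenyClass_le hB hA e.symm (B j))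
  exact ⟨σ, fun i => (hab _ _).1 (hσ i).symm⟩

end Permutations

theorem nonempty_pi_linearEquiv_of_sameClasses {R : Type*} [Ring R] {n : ℕ} (A : Fin n → Type u)
    (B : Fin n → Type w) [∀ i, AddCommGroup (A i)] [∀ i, Module R (A i)]
    [∀ j, AddCommGroup (B j)] [∀ j, Module R (B j)]
    (hA : ∀ i, IsBiuniformModule R (A i)) (hB : ∀ j, IsBiuniformModule R (B j))
    (σ τ : Equiv.Perm (Fin n)) (hm : ∀ i, SameMonogenyClass R (A i) (B (σ i)))
    (he : ∀ i, SameEpigenyClass R (A i) (B (τ i))) :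
    Nonempty (((i : Fin n) → A i) ≃ₗ[R] ((j : Fin n) → B j)) := by
  obtain ⟨E⟩ := nonempty_pi_linearEquiv_of_perm A (fun i => ModuleCat.of R (B (σ i))) hA
    (fun i => hB (σ i)) (τ.trans σ.symm) hm fun i => by
      rw [Equiv.trans_apply, Equiv.apply_symm_apply]
      exact he i
  exact ⟨E.trans (LinearEquiv.piCongrLeft R B σ)⟩

/-- Weak Krull-Schmidt theorem for finite direct sums of biuniform modules:
`A₁ ⊕ ⋯ ⊕ Aₙ ≅ B₁ ⊕ ⋯ ⊕ B_t` iff `n = t` and the monogeny classes and the epigeny classes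
of the two families coincide up to two permutations. -/
theorem weak_krull_schmidt_biuniform
    {R : Type*} [Ring R] {n t : ℕ}
    (A : Fin n → Type*) (B : Fin t → Type*)
    [∀ i, AddCommGroup (A i)] [∀ i, Module R (A i)]
    [∀ j, AddCommGroup (B j)] [∀ j, Module R (B j)]
    (hA : ∀ i, IsBiuniformModule R (A i)) (hB : ∀ j, IsBiuniformModule R (B j)) :
    Nonempty (((i : Fin n) → A i) ≃ₗ[R] ((j : Fin t) → B j)) ↔
      n = t ∧ ∃ σ τ : Fin n ≃ Fin t,
        (∀ i, SameMonogenyClass R (A i) (B (σ i))) ∧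
        (∀ i, SameEpigenyClass R (A i) (B (τ i))) := by
  constructor
  · rintro ⟨e⟩
    obtain ⟨σ, hσ⟩ := exists_equiv_sameMonogenyClass (fun i => (hA i).1) (fun j => (hB j).1) e
    obtain ⟨τ, hτ⟩ := exists_equiv_sameEpigenyClass (fun i => (hA i).2) (fun j => (hB j).2) e
    exact ⟨by simpa using Fintype.card_congr σ, σ, τ, hσ, hτ⟩
  · rintro ⟨rfl, σ, τ, hσ, hτ⟩
    exact nonempty_pi_linearEquiv_of_sameClasses A B hA hB σ τ hσ hτ
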